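/- Fix an integer p₀ ≥ 1 and define ℓ : {1,2,3,…} → {0,1,2,…} by ℓ(k) = k − 1 if k ≤ p₀·log(1+k), and ℓ(k) = p₀·⌊log(1+k)⌋ otherwise (natural logarithm). For an integer l ≥ 2, let p*(l) be the largest integer q ≥ 1 such that q + ℓ(q) < l. Then there exists a constant c₀ ≥ 0, depending only on p₀, such that for all integers l ≥ 2, all integers s with 0 ≤ s < ℓ(l), and all integers p with p*(l) + 1 ≤ p ≤ l, one has min(ℓ(p), l − p + s) ≥ s/2 + (l − p)/2 − c₀. -/

import Mathlib

/-!
Maximality of `p*(l)` gives `l ≤ p + ℓ(p)`, that is, `l - p ≤ ℓ(p)`. Since `s < ℓ(l)`, the claim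
reduces to bounding `ℓ(l) - ℓ(p)` by a constant. Now `ℓ(k)` lies within `2 p₀²` below
`p₀ log (1 + k)`: where `ℓ(k) = k - 1`, the exponential growth of `1 + k` in `log (1 + k)` forces
`log (1 + k) ≤ 2 p₀`, and elsewhere rounding costs at most `p₀`. Finally
`1 + l ≤ 1 + p + p₀ log (1 + p) ≤ (1 + p₀) (1 + p)`, so `log (1 + l)` exceeds `log (1 + p)` by at
most `p₀`.
-/

/-- The truncation function `ℓ` from (5.2): `ℓ(k) = k - 1` if `k ≤ p₀ log(1+k)`,
and `ℓ(k) = p₀ ⌊log(1+k)⌋` otherwise. -/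
noncomputable def ell (p₀ : ℕ) (k : ℕ) : ℕ :=
  if (k : ℝ) ≤ (p₀ : ℝ) * Real.log (1 + (k : ℝ)) then k - 1
  else p₀ * ⌊Real.log (1 + (k : ℝ))⌋₊

/-- `p*(l)`: the largest integer `q ≥ 1` with `q + ℓ(q) < l`. -/
noncomputable def pstar (p₀ l : ℕ) : ℕ :=
  sSup {q : ℕ | 1 ≤ q ∧ q + ell p₀ q < l}

theorem log_le_two_mul_of_sub_one_le_mul_log {a x : ℝ} (ha : 0 ≤ a) (hx : 0 < x)
    (h : x - 1 ≤ a * Real.log x) : Real.log x ≤ 2 * a := by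
  by_contra! hlt
  have hpos : 0 < Real.log x := by linarith
  have hexp : 1 + Real.log x + Real.log x ^ 2 / 2 ≤ x := by
    simpa only [Real.exp_log hx] using Real.quadratic_le_exp_of_nonneg hpos.le
  have hsq : 2 * a * Real.log x < Real.log x * Real.log x := by gcongr
  linarith

theorem log_le_log_add_of_le_add_mul_log {a x y : ℝ} (ha : 0 ≤ a) (hx : 0 < x) (hy : 0 < y)
    (h : y ≤ x + a * Real.log x) : Real.log y ≤ Real.log x + a := by
  have hyx : y ≤ x * Real.exp a :=
    calc y ≤ x + a * Real.log x := h
      _ ≤ x + a * x := by gcongr; exact Real.log_le_self hx.le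
      _ = x * (a + 1) := by ring
      _ ≤ x * Real.exp a := by gcongr; exact Real.add_one_le_exp a
  calc Real.log y ≤ Real.log (x * Real.exp a) := Real.log_le_log hy hyx
    _ = Real.log x + a := by rw [Real.log_mul hx.ne' (Real.exp_ne_zero a), Real.log_exp]

theorem ell_le_mul_log (p₀ k : ℕ) : (ell p₀ k : ℝ) ≤ p₀ * Real.log (1 + k) := by
  unfold ell
  split_ifs with h
  · exact (Nat.cast_le.mpr (Nat.sub_le k 1)).trans h
  · rw [Nat.cast_mul]
    gcongr
    exact Nat.floor_le (Real.log_nonneg (by simp))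

theorem mul_log_le_ell_add (p₀ k : ℕ) :
    p₀ * Real.log (1 + k) ≤ ell p₀ k + 2 * (p₀ : ℝ) ^ 2 := by
  unfold ell
  split_ifs with h
  · have hlog : Real.log (1 + k) ≤ 2 * p₀ :=
      log_le_two_mul_of_sub_one_le_mul_log p₀.cast_nonneg (by positivity) (by linarith)
    calc p₀ * Real.log (1 + k) ≤ p₀ * (2 * p₀) := by gcongr
      _ = 2 * (p₀ : ℝ) ^ 2 := by ring
      _ ≤ ((k - 1 : ℕ) : ℝ) + 2 * (p₀ : ℝ) ^ 2 := le_add_of_nonneg_left (Nat.cast_nonneg _)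
  · have hsq : (p₀ : ℝ) ≤ (p₀ : ℝ) ^ 2 := mod_cast Nat.le_self_pow two_ne_zero p₀
    calc p₀ * Real.log (1 + k) ≤ p₀ * (⌊Real.log (1 + (k : ℝ))⌋₊ + 1) := by
          gcongr
          exact (Nat.lt_floor_add_one _).le
      _ ≤ ((p₀ * ⌊Real.log (1 + (k : ℝ))⌋₊ : ℕ) : ℝ) + 2 * (p₀ : ℝ) ^ 2 := by
          push_cast
          linarith

theorem ell_le_ell_add_of_le_add_ell {p₀ l p : ℕ} (h : l ≤ p + ell p₀ p) :
    (ell p₀ l : ℝ) ≤ ell p₀ p + 3 * (p₀ : ℝ) ^ 2 := by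
  have hl : (l : ℝ) ≤ p + ell p₀ p := mod_cast h
  have hlog : Real.log (1 + l) ≤ Real.log (1 + p) + p₀ :=
    log_le_log_add_of_le_add_mul_log p₀.cast_nonneg (by positivity) (by positivity)
      (by linarith [ell_le_mul_log p₀ p])
  calc (ell p₀ l : ℝ) ≤ p₀ * Real.log (1 + l) := ell_le_mul_log p₀ l
    _ ≤ p₀ * (Real.log (1 + p) + p₀) := by gcongr
    _ = p₀ * Real.log (1 + p) + (p₀ : ℝ) ^ 2 := by ring
    _ ≤ ell p₀ p + 3 * (p₀ : ℝ) ^ 2 := by linarith [mul_log_le_ell_add p₀ p]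

theorem le_add_ell_of_pstar_lt {p₀ l p : ℕ} (h : pstar p₀ l < p) : l ≤ p + ell p₀ p := by
  by_contra! hlt
  have hbdd : BddAbove {q : ℕ | 1 ≤ q ∧ q + ell p₀ q < l} :=
    ⟨l, fun _ hq => (Nat.le_add_right _ _).trans hq.2.le⟩
  exact h.not_ge (le_csSup hbdd ⟨Nat.one_le_of_lt h, hlt⟩)

/-- There is a constant `c₀ ≥ 0`, depending only on `p₀`, such that for all `l ≥ 2`,
all integers `0 ≤ s < ℓ(l)` and all `p` with `p*(l) + 1 ≤ p ≤ l`, one has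
`min(ℓ(p), l - p + s) ≥ s/2 + (l - p)/2 - c₀`. -/
theorem stmt13 (p₀ : ℕ) (hp₀ : 1 ≤ p₀) :
    ∃ c₀ : ℝ, 0 ≤ c₀ ∧ ∀ l : ℕ, 2 ≤ l → ∀ s : ℕ, s < ell p₀ l →
      ∀ p : ℕ, pstar p₀ l + 1 ≤ p → p ≤ l →
        min ((ell p₀ p : ℝ)) ((l : ℝ) - (p : ℝ) + (s : ℝ)) ≥
          (s : ℝ) / 2 + ((l : ℝ) - (p : ℝ)) / 2 - c₀ := by
  refine ⟨3 * (p₀ : ℝ) ^ 2 / 2, by positivity, fun l _ s hs p hlow hpl => ?_⟩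
  have hl : l ≤ p + ell p₀ p := le_add_ell_of_pstar_lt hlow
  have hell : (ell p₀ l : ℝ) ≤ ell p₀ p + 3 * (p₀ : ℝ) ^ 2 := ell_le_ell_add_of_le_add_ell hl
  have hc : 0 ≤ 3 * (p₀ : ℝ) ^ 2 := by positivity
  rify at hs hl hpl
  exact le_min (by linarith) (by linarith)
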